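/- arXiv:2104.10625 — 4 statements merged into one kernel-verified Lean document; each statement's English description precedes it below -/
import Mathlib

section
/- Let E and R be finite sets of entities and relations, where each relation r ∈ R has a fixed arity ar(r) with 2 ≤ ar(r) ≤ N, and let S be a finite set of facts, each fact being a tuple (r, e_1, ..., e_n) with r ∈ R, n = ar(r), and e_1, ..., e_n ∈ E. Then there exist a number of segments M, a segment dimension q, entity embeddings e ↦ 𝐞 ∈ ℝ^{Mq} (a single embedding per entity shared across all argument positions and all arities), relation embeddings r ↦ 𝐫 ∈ ℝ^{Mq}, and for each arity n with 2 ≤ n ≤ N a sparse core tensor Z^n (every block of Z^n belonging to {−I_1^n, I_0^n, I_1^n}), such that for every candidate fact s = (r, e_1, ..., e_n) of every arity n, the S2S score f_z(𝐫, 𝐞_1, ..., 𝐞_n; Z^n) computed on the first min(n, M) segments of the embeddings equals 1 if s ∈ S and equals 0 if s ∉ S. -/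
open Finset

/-- The `j`-th segment (of length `q`) of a vector in `ℝ^(M·q)`:
coordinates `(j-1)q+1` through `jq` (1-based), i.e. `j·q, …, j·q + q - 1` (0-based). -/
def seg (M q : ℕ) (v : Fin (M * q) → ℝ) (j : Fin M) : Fin q → ℝ :=
  fun k => v (finProdFinEquiv (j, k))

/-- Multilinear inner product of `n+1` vectors in `ℝ^q`. -/
def mip (n q : ℕ) (v : Fin (n + 1) → Fin q → ℝ) : ℝ :=
  ∑ k : Fin q, ∏ i : Fin (n + 1), v i k

/-- The `(n+1)`-order superdiagonal tensor `I_v^n` of size `q` in each mode: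
`v` when all indices coincide, `0` elsewhere. -/
def diagT (n q : ℕ) (v : ℝ) : (Fin (n + 1) → Fin q) → ℝ :=
  fun k => if ∀ i, k i = k 0 then v else 0

/-- Tucker product of an `(n+1)`-order tensor of size `q` in each mode with
vectors `u 0, …, u n ∈ ℝ^q`. -/
def tucker (n q : ℕ) (G : (Fin (n + 1) → Fin q) → ℝ)
    (u : Fin (n + 1) → Fin q → ℝ) : ℝ :=
  ∑ k : Fin (n + 1) → Fin q, G k * ∏ i : Fin (n + 1), u i (k i)

/-- S2S score of vectors `vs 0 = r, vs 1 = e_1, …, vs n = e_n ∈ ℝ^(m·q)` with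
an S2S core tensor `Z` for arity `n` with `m` segments of size `q`. -/
def s2sScore (n m q : ℕ)
    (Z : (Fin (n + 1) → Fin m) → (Fin (n + 1) → Fin q) → ℝ)
    (vs : Fin (n + 1) → Fin (m * q) → ℝ) : ℝ :=
  ∑ j : Fin (n + 1) → Fin m, tucker n q (Z j) (fun i => seg m q (vs i) (j i))

/-- S2S score computed on the first `m` segments of vectors in `ℝ^(M·q)` (`m ≤ M`). -/
def s2sScoreFirst (n m M q : ℕ) (h : m ≤ M)
    (Z : (Fin (n + 1) → Fin m) → (Fin (n + 1) → Fin q) → ℝ)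
    (vs : Fin (n + 1) → Fin (M * q) → ℝ) : ℝ :=
  ∑ j : Fin (n + 1) → Fin m,
    tucker n q (Z j) (fun i => seg M q (vs i) (Fin.castLE h (j i)))

/-- A sparse core tensor: every block lies in `{-I_1^n, I_0^n, I_1^n}`. -/
def SparseCore (n m q : ℕ)
    (Z : (Fin (n + 1) → Fin m) → (Fin (n + 1) → Fin q) → ℝ) : Prop :=
  ∀ j, Z j = diagT n q (-1) ∨ Z j = diagT n q 0 ∨ Z j = diagT n q 1

/-!
Reserve for each fact of `S` one coordinate within the segments, and let every embedding entry be
`0` or `1`: at that coordinate, the embedding of `r` has a `1` when the fact has relation `r`, and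
the `j`-th segment of the embedding of `e` has a `1` when the fact has `e` as its `j`-th argument.
Recording the argument position in the segment is what allows one embedding per entity. A core
tensor whose only nonzero block pairs the `i`-th argument with its `i`-th segment then counts the
coordinates whose fact is the queried one.
-/

section CoreTensor

variable {n m M q : ℕ}

lemma tucker_diagT (c : ℝ) (u : Fin (n + 1) → Fin q → ℝ) :
    tucker n q (diagT n q c) u = c * mip n q u := by
  have diag_iff (k : Fin (n + 1) → Fin q) :
      (∀ i, k i = k 0) ↔ k ∈ Set.range (fun a (_ : Fin (n + 1)) => a) :=
    ⟨fun h => ⟨k 0, funext fun i => (h i).symm⟩, by rintro ⟨a, rfl⟩ _; rfl⟩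
  have const_injective : Function.Injective fun (a : Fin q) (_ : Fin (n + 1)) => a :=
    fun _ _ h => congrFun h 0
  rw [mip, Finset.mul_sum]
  refine (Fintype.sum_of_injective _ const_injective _ _ (fun k hk => ?_) fun a => ?_).symm
  · simp only [diagT, if_neg (mt (diag_iff k).1 hk), zero_mul]
  · simp only [diagT, implies_true, if_true]

/-- A choice of segments `j` for the `n + 1` modes is aligned when it takes the first segment of the
relation and the `i`-th segment of the `i`-th entity. Indices are compared in `ℕ`, so that the
notion makes sense, but is not satisfied by any `j`, when there are fewer than `n` segments. -/
def IsAligned (j : Fin (n + 1) → Fin m) : Prop :=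
  (j 0 : ℕ) = 0 ∧ ∀ i : Fin n, (j i.succ : ℕ) = i

instance : DecidablePred (IsAligned (n := n) (m := m)) :=
  fun _ => inferInstanceAs (Decidable (_ ∧ _))

lemma card_isAligned (hn : 1 ≤ n) (hnm : n ≤ m) :
    #{j : Fin (n + 1) → Fin m | IsAligned j} = 1 := by
  refine Finset.card_eq_one.2 ⟨Fin.cons ⟨0, hn.trans hnm⟩ (Fin.castLE hnm), ?_⟩
  ext j
  rw [Finset.mem_filter_univ, Finset.mem_singleton]
  simp [IsAligned, funext_iff, Fin.forall_fin_succ, Fin.ext_iff]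

/-- The core tensor with block `I_1^n` at the aligned choice of segments and `I_0^n` elsewhere. -/
def alignedCore (n m q : ℕ) (j : Fin (n + 1) → Fin m) : (Fin (n + 1) → Fin q) → ℝ :=
  diagT n q (if IsAligned j then 1 else 0)

lemma sparseCore_alignedCore (n m q : ℕ) : SparseCore n m q (alignedCore n m q) := by
  intro j
  unfold alignedCore
  split_ifs
  · exact .inr (.inr rfl)
  · exact .inr (.inl rfl)

lemma s2sScoreFirst_alignedCore (h : m ≤ M) (vs : Fin (n + 1) → Fin (M * q) → ℝ) :
    s2sScoreFirst n m M q h (alignedCore n m q) vs =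
      ∑ j : Fin (n + 1) → Fin m with IsAligned j,
        mip n q fun i => seg M q (vs i) (Fin.castLE h (j i)) := by
  simp only [s2sScoreFirst, alignedCore, tucker_diagT, ite_mul, one_mul, zero_mul,
    Finset.sum_filter]

end CoreTensor

section Embeddings

variable {M n q : ℕ}

/-- The vector of `ℝ^(M·q)` with prescribed segments. -/
def ofSegments (w : Fin M → Fin q → ℝ) : Fin (M * q) → ℝ :=
  Function.uncurry w ∘ finProdFinEquiv.symm

lemma seg_ofSegments (w : Fin M → Fin q → ℝ) (j : Fin M) : seg M q (ofSegments w) j = w j := by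
  ext k
  simp only [seg, ofSegments, Function.comp_apply, Equiv.symm_apply_apply,
    Function.uncurry_apply_pair]

lemma mip_indicator (A : Fin (n + 1) → Set (Fin q)) :
    mip n q (fun i => (A i).indicator 1) = (⋂ i, A i).ncard := by
  classical
  have common_iff (k : Fin q) : (∀ i, k ∈ A i) ↔ k ∈ ⋂ i, A i := Set.mem_iInter.symm
  simp only [mip, Set.indicator_apply, Pi.one_apply, Finset.prod_ite_zero, Finset.prod_const_one,
    Finset.mem_univ, true_imp_iff, Finset.sum_boole, common_iff]
  rw [← Set.ncard_coe_finset, Finset.coe_filter_univ, Set.ofPred_mem_eq]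

lemma ncard_image_val_eq {α K : Type*} [DecidableEq α] {S : Finset α} (f : S ↪ K) (s : α) :
    (f '' {t | t.1 = s}).ncard = if s ∈ S then 1 else 0 := by
  rw [Set.ncard_image_of_injective _ f.injective]
  split_ifs with hs
  · exact Set.ncard_eq_one.2 ⟨⟨s, hs⟩, by ext; simp [Subtype.ext_iff]⟩
  · rw [Set.ncard_eq_zero, Set.eq_empty_iff_forall_notMem]
    rintro ⟨t, ht⟩ rfl
    exact hs ht

variable {E R K : Type*} {ar : R → ℕ} {S : Finset (Σ r : R, Fin (ar r) → E)}

/-- The coordinates of the facts with relation `r`, where `code` assigns a coordinate to each fact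
of `S`. -/
def relationSupport (code : S ↪ K) (r : R) : Set K :=
  code '' {t | t.1.1 = r}

/-- The coordinates of the facts whose `j`-th argument (counted from `0`) exists and is `e`. -/
def entitySupport (code : S ↪ K) (e : E) (j : ℕ) : Set K :=
  code '' {t | ∃ h : j < ar t.1.1, t.1.2 ⟨j, h⟩ = e}

lemma relationSupport_inter_iInter_entitySupport (code : S ↪ K) (r : R) (e : Fin (ar r) → E) :
    relationSupport code r ∩ ⋂ i : Fin (ar r), entitySupport code (e i) i =
      code '' {t | t.1 = ⟨r, e⟩} := by
  refine Set.Subset.antisymm ?_ ?_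
  · rintro _ ⟨⟨⟨⟨r, e'⟩, ht⟩, rfl, rfl⟩, hk⟩
    refine ⟨⟨⟨r, e'⟩, ht⟩, ?_, rfl⟩
    have args_eq (i : Fin (ar r)) : e' i = e i := by
      obtain ⟨t, ⟨_, hi⟩, heq⟩ := Set.mem_iInter.1 hk i
      obtain rfl := code.injective heq
      exact hi
    exact congrArg (Sigma.mk r) (funext args_eq)
  · rintro _ ⟨⟨_, ht⟩, rfl, rfl⟩
    exact ⟨⟨_, rfl, rfl⟩, Set.mem_iInter.2 fun i => ⟨_, ⟨i.2, rfl⟩, rfl⟩⟩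

/-- The embedding of a relation, the same `0`-`1` vector in every segment. -/
noncomputable def relationEmbedding (M : ℕ) (code : S ↪ Fin q) (r : R) : Fin (M * q) → ℝ :=
  ofSegments fun _ => (relationSupport code r).indicator 1

/-- The embedding of an entity, whose `j`-th segment records the facts that have it as `j`-th
argument. -/
noncomputable def entityEmbedding (M : ℕ) (code : S ↪ Fin q) (e : E) : Fin (M * q) → ℝ :=
  ofSegments fun j => (entitySupport code e j).indicator 1

lemma mip_embeddings_of_isAligned [DecidableEq E] [DecidableEq R] {m : ℕ} (h : m ≤ M)
    (code : S ↪ Fin q) (r : R) (e : Fin (ar r) → E) {j : Fin (ar r + 1) → Fin m}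
    (hj : IsAligned j) :
    (mip (ar r) q fun i =>
        seg M q (Fin.cases (relationEmbedding M code r) (fun i => entityEmbedding M code (e i)) i)
          (Fin.castLE h (j i))) =
      if (⟨r, e⟩ : Σ r : R, Fin (ar r) → E) ∈ S then 1 else 0 := by
  let A : Fin (ar r + 1) → Set (Fin q) :=
    Fin.cons (relationSupport code r) fun i => entitySupport code (e i) i
  have segments_eq :
      (fun i => seg M q
        (Fin.cases (relationEmbedding M code r) (fun i => entityEmbedding M code (e i)) i)
          (Fin.castLE h (j i))) = fun i => (A i).indicator 1 := by
    funext i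
    cases i using Fin.cases with
    | zero => simp only [A, Fin.cases_zero, Fin.cons_zero, relationEmbedding, seg_ofSegments]
    | succ i =>
      simp only [A, Fin.cases_succ, Fin.cons_succ, entityEmbedding, seg_ofSegments,
        Fin.val_castLE, hj.2 i]
  have iInter_eq : ⋂ i, A i = code '' {t | t.1 = ⟨r, e⟩} := by
    rw [← relationSupport_inter_iInter_entitySupport]
    ext k
    simp only [Set.mem_iInter, Set.mem_inter_iff, Fin.forall_fin_succ, A, Fin.cons_zero,
      Fin.cons_succ]
  rw [segments_eq, mip_indicator, iInter_eq, ncard_image_val_eq, Nat.cast_ite, Nat.cast_one,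
    Nat.cast_zero]

end Embeddings

theorem s2s_expressive_mixed_arity_general {E R : Type*} [DecidableEq E] [DecidableEq R]
    {M q : ℕ} (ar : R → ℕ) (S : Finset (Σ r : R, Fin (ar r) → E))
    (har : ∀ t ∈ S, 1 ≤ ar t.1 ∧ ar t.1 ≤ M) (hq : #S ≤ q) :
    ∃ (Eemb : E → Fin (M * q) → ℝ) (Remb : R → Fin (M * q) → ℝ)
      (Z : ∀ n : ℕ, (Fin (n + 1) → Fin (min n M)) → (Fin (n + 1) → Fin q) → ℝ),
      (∀ n : ℕ, SparseCore n (min n M) q (Z n)) ∧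
      ∀ (r : R) (e : Fin (ar r) → E),
        s2sScoreFirst (ar r) (min (ar r) M) M q (min_le_right _ _) (Z (ar r))
            (Fin.cases (Remb r) (fun i => Eemb (e i)))
          = if (⟨r, e⟩ : Σ r : R, Fin (ar r) → E) ∈ S then 1 else 0 := by
  obtain ⟨code⟩ : Nonempty (S ↪ Fin q) :=
    Function.Embedding.nonempty_of_card_le (by simpa using hq)
  refine ⟨entityEmbedding M code, relationEmbedding M code, fun n => alignedCore n (min n M) q,
    fun n => sparseCore_alignedCore n (min n M) q, fun r e => ?_⟩
  rw [s2sScoreFirst_alignedCore, Finset.sum_congr rfl fun j hj =>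
    mip_embeddings_of_isAligned _ code r e (Finset.mem_filter.1 hj).2, Finset.sum_const]
  split_ifs with hs
  · obtain ⟨one_le, le_M⟩ := har _ hs
    rw [card_isAligned one_le (le_min le_rfl le_M), one_smul]
  · exact smul_zero _

/-- expressiveness of S2S on mixed-arity data: for finite entity and
relation sets, each relation `r` having a fixed arity `ar r` with `2 ≤ ar r ≤ N`, and any
finite set `S` of facts `(r, e_1, …, e_{ar r})`, there exist a number of segments `M ≥ 1`,
a segment dimension `q ≥ 1`, a single shared embedding per entity and per relation in
`ℝ^(M·q)`, and for each arity `2 ≤ n ≤ N` a sparse core tensor `Z n` with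
`min n M` segments (every block in `{-I_1^n, I_0^n, I_1^n}`), such that for every
candidate fact the S2S score computed on the first `min(n, M)` segments of the embeddings
is `1` on facts in `S` and `0` on all other candidate facts. -/
theorem s2s_expressive_mixed_arity {E R : Type*}
    [Fintype E] [Fintype R] [DecidableEq E] [DecidableEq R]
    (N : ℕ) (ar : R → ℕ) (har : ∀ r : R, 2 ≤ ar r ∧ ar r ≤ N)
    (S : Finset (Σ r : R, Fin (ar r) → E)) :
    ∃ (M q : ℕ) (_hM : 1 ≤ M) (_hq : 1 ≤ q)
      (Eemb : E → Fin (M * q) → ℝ) (Remb : R → Fin (M * q) → ℝ)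
      (Z : ∀ n : ℕ, 2 ≤ n → n ≤ N →
        (Fin (n + 1) → Fin (min n M)) → (Fin (n + 1) → Fin q) → ℝ),
      (∀ (n : ℕ) (h2 : 2 ≤ n) (hN : n ≤ N), SparseCore n (min n M) q (Z n h2 hN)) ∧
      ∀ (r : R) (e : Fin (ar r) → E),
        s2sScoreFirst (ar r) (min (ar r) M) M q (min_le_right _ _)
            (Z (ar r) (har r).1 (har r).2)
            (Fin.cases (Remb r) (fun i => Eemb (e i)))
          = if (⟨r, e⟩ : Σ r : R, Fin (ar r) → E) ∈ S then 1 else 0 := by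
  obtain ⟨Eemb, Remb, Z, hZ, hscore⟩ := s2s_expressive_mixed_arity_general (M := N + 1) ar S
    (fun t _ => ⟨one_le_two.trans (har t.1).1, (har t.1).2.trans N.le_succ⟩) (Nat.le_succ #S)
  exact ⟨N + 1, #S + 1, N.succ_pos, (#S).succ_pos, Eemb, Remb, fun n _ _ => Z n,
    fun n _ _ => hZ n, hscore⟩
end

section
/- Fix an arity n ≥ 2. Let E and R be finite sets of entities and relations and let S be a finite set of n-ary facts, each fact being a tuple (r, e_1, ..., e_n) with r ∈ R and e_1, ..., e_n ∈ E. Set d = |S|. Then there exist a relation embedding map R_emb: R → ℝ^d and, for each argument position i ∈ {1, ..., n}, a position-specific entity embedding map E_i: E → ℝ^d (i.e., a CP decomposition with one factor matrix per mode) such that for every candidate fact s = (r, e_1, ..., e_n), the CP score ⟨R_emb(r), E_1(e_1), ..., E_n(e_n)⟩ equals 1 if s ∈ S and equals 0 if s ∉ S. In particular, d = |S| dimensions suffice for a CP model to accurately represent the ground truth of any n-ary relational data. -/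
open Finset

namespace CP

lemma prod_ite_apply_eq {ι M : Type*} {α : ι → Type*} [Fintype ι] [∀ i, DecidableEq (α i)]
    [CommMonoidWithZero M] (x y : ∀ i, α i) :
    ∏ i, (if x i = y i then (1 : M) else 0) = if x = y then 1 else 0 := by
  simp only [prod_ite_zero, mem_univ, true_implies, prod_const_one, funext_iff]

lemma card_filter_equiv_coe_eq {ι α : Type*} [Fintype ι] [DecidableEq α] {S : Finset α}
    (f : ι ≃ S) (a : α) :
    #{k | (f k : α) = a} = if a ∈ S then 1 else 0 := by
  rw [card_filter, f.sum_comp fun s : S => if (s : α) = a then 1 else 0,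
    sum_coe_sort S fun s => if s = a then 1 else 0, sum_ite_eq']

lemma mip_cases (n q : ℕ) (u : Fin q → ℝ) (v : Fin n → Fin q → ℝ) :
    mip n q (Fin.cases u v) = ∑ k, u k * ∏ i, v i k := by
  simp only [mip, Fin.prod_univ_succ, Fin.cases_zero, Fin.cases_succ]

variable {E R : Type*} [DecidableEq E] [DecidableEq R] {n q : ℕ}

/-- The relation embedding attached to a list `t` of `q` facts, one coordinate per entry of the
list: the `k`-th coordinate of the vector of `r` is the indicator that `t k` has relation `r`. -/
def relationEmb (t : Fin q → R × (Fin n → E)) (r : R) : Fin q → ℝ :=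
  fun k => if (t k).1 = r then 1 else 0

/-- The entity embedding at argument position `i` attached to a list `t` of `q` facts: the `k`-th
coordinate of the vector of `x` is the indicator that `t k` has `x` at position `i`. -/
def entityEmb (t : Fin q → R × (Fin n → E)) (i : Fin n) (x : E) : Fin q → ℝ :=
  fun k => if (t k).2 i = x then 1 else 0

lemma relationEmb_mul_prod_entityEmb (t : Fin q → R × (Fin n → E)) (r : R) (e : Fin n → E)
    (k : Fin q) :
    relationEmb t r k * ∏ i, entityEmb t i (e i) k = if t k = (r, e) then 1 else 0 := by
  simp only [relationEmb, entityEmb, prod_ite_apply_eq, Prod.ext_iff, ite_and, ite_mul,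
    one_mul, zero_mul]

theorem mip_relationEmb_entityEmb (t : Fin q → R × (Fin n → E)) (r : R) (e : Fin n → E) :
    mip n q (Fin.cases (relationEmb t r) fun i => entityEmb t i (e i)) = #{k | t k = (r, e)} := by
  simp only [mip_cases, relationEmb_mul_prod_entityEmb, sum_boole]

end CP

theorem cp_expressive_general {E R : Type*} [DecidableEq E] [DecidableEq R] (n : ℕ)
    (S : Finset (R × (Fin n → E))) :
    ∃ (Remb : R → Fin S.card → ℝ) (Eemb : Fin n → E → Fin S.card → ℝ),
      ∀ (r : R) (e : Fin n → E),
        mip (n := n) (q := S.card) (Fin.cases (Remb r) (fun i => Eemb i (e i)))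
          = if (r, e) ∈ S then 1 else 0 := by
  let facts : Fin S.card → R × (Fin n → E) := fun k => S.equivFin.symm k
  refine ⟨CP.relationEmb facts, CP.entityEmb facts, fun r e => ?_⟩
  rw [CP.mip_relationEmb_entityEmb, CP.card_filter_equiv_coe_eq, Nat.cast_ite, Nat.cast_one,
    Nat.cast_zero]

/-- for any finite set `S` of `n`-ary facts over finite entity and relation
sets, there is a CP decomposition with `d = |S|` dimensions — a relation embedding map and
one position-specific entity embedding map per argument position — whose CP score is `1`
on facts in `S` and `0` on all other candidate facts. -/
theorem cp_expressive {E R : Type*} [Fintype E] [Fintype R] [DecidableEq E] [DecidableEq R]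
    (n : ℕ) (hn : 2 ≤ n)
    (S : Finset (R × (Fin n → E))) :
    ∃ (Remb : R → Fin S.card → ℝ) (Eemb : Fin n → E → Fin S.card → ℝ),
      ∀ (r : R) (e : Fin n → E),
        mip (n := n) (q := S.card) (Fin.cases (Remb r) (fun i => Eemb i (e i)))
          = if (r, e) ∈ S then 1 else 0 :=
  cp_expressive_general n S
end

section
/- Fix an arity n ≥ 2 and let s_1, ..., s_K be a finite list of n-ary facts over finite entity set E and relation set R, where s_k = (r_k, e_{k,1}, ..., e_{k,n}). Define indicator embeddings in ℝ^K by: for r ∈ R, (R_emb(r))_k = 1 if r = r_k and 0 otherwise; and for each position i ∈ {1, ..., n} and e ∈ E, (E_i(e))_k = 1 if e = e_{k,i} and 0 otherwise. Then for every candidate fact s = (r, e_1, ..., e_n), the CP score ⟨R_emb(r), E_1(e_1), ..., E_n(e_n)⟩ equals the number of indices k ∈ {1, ..., K} with s_k = s. -/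
open Finset

theorem boole_mul_prod_boole {S ι R : Type*} {E : ι → Type*} [CommSemiring S] [Fintype ι]
    [DecidableEq R] [∀ i, DecidableEq (E i)] (r : R) (e : ∀ i, E i) (s : R × ∀ i, E i) :
    (if r = s.1 then 1 else 0) * ∏ i, (if e i = s.2 i then (1 : S) else 0) =
      if s = (r, e) then 1 else 0 := by
  have eq_iff : s = (r, e) ↔ r = s.1 ∧ ∀ i, e i = s.2 i := by
    rw [eq_comm, Prod.ext_iff, funext_iff]
  simp only [Fintype.prod_boole, boole_mul, ← ite_and, eq_iff]

theorem mip_cases {n q : ℕ} (u : Fin q → ℝ) (v : Fin n → Fin q → ℝ) :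
    mip n q (Fin.cases u v) = ∑ k, u k * ∏ i, v i k :=
  Finset.sum_congr rfl fun _ _ => Fin.prod_univ_succ _

theorem cp_indicator_embeddings_count_general {S ι κ R : Type*} {E : ι → Type*} [CommSemiring S]
    [Fintype ι] [Fintype κ] [DecidableEq R] [∀ i, DecidableEq (E i)]
    (facts : κ → R × ∀ i, E i) (Remb : R → κ → S) (Eemb : ∀ i, E i → κ → S)
    (hRemb : ∀ r k, Remb r k = if r = (facts k).1 then 1 else 0)
    (hEemb : ∀ i e k, Eemb i e k = if e = (facts k).2 i then 1 else 0) (r : R) (e : ∀ i, E i) :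
    ∑ k, Remb r k * ∏ i, Eemb i (e i) k = (#{k | facts k = (r, e)} : S) := by
  simp only [hRemb, hEemb, boole_mul_prod_boole, sum_boole]

/-- with the indicator embeddings in `ℝ^K` built from the list of facts
`s_1, …, s_K` (relation indicator, and one position-specific entity indicator per
argument position), the CP score of any candidate fact `(r, e_1, …, e_n)` equals the
number of indices `k` with `s_k = (r, e_1, …, e_n)`. -/
theorem cp_indicator_embeddings_count {E R : Type*} [DecidableEq E] [DecidableEq R]
    (n K : ℕ) (hn : 2 ≤ n)
    (facts : Fin K → R × (Fin n → E))
    (Remb : R → Fin K → ℝ) (Eemb : Fin n → E → Fin K → ℝ)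
    (hRemb : ∀ (r : R) (k : Fin K), Remb r k = if r = (facts k).1 then 1 else 0)
    (hEemb : ∀ (i : Fin n) (e : E) (k : Fin K),
      Eemb i e k = if e = (facts k).2 i then 1 else 0) :
    ∀ (r : R) (e : Fin n → E),
      mip (n := n) (q := K) (Fin.cases (Remb r) (fun i => Eemb i (e i)))
        = ((Finset.univ.filter fun k : Fin K => facts k = (r, e)).card : ℝ) := by
  intro r e
  rw [mip_cases]
  exact cp_indicator_embeddings_count_general facts Remb Eemb hRemb hEemb r e
end

section
/- Fix q ≥ 1. Let G ∈ ℝ^{2q × 2q × 2q} be the 3-order tensor with entries G_{k, k, q+k} = 1/2 and G_{q+k, q+k, k} = 1/2 for every k ∈ {1, ..., q}, and all other entries zero. Then for all vectors v, w, h_1, t_1, h_2, t_2 ∈ ℝ^q, setting r = [v; w], e_1 = [h_1; t_1], e_2 = [h_2; t_2] ∈ ℝ^{2q}, the Tucker product satisfies G ×_1 r ×_2 e_1 ×_3 e_2 = (1/2)·Σ_{k=1}^q (v_k (h_1)_k (t_2)_k + w_k (t_1)_k (h_2)_k), which is exactly the SimplE scoring function of the triple. Hence SimplE is a sparse special case of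 the Tucker core tensor. -/
open Finset

theorem mip_two {q : ℕ} (a b c : Fin q → ℝ) : mip 2 q ![a, b, c] = ∑ k, a k * b k * c k := by
  simp [mip, Fin.prod_univ_three]

theorem tucker_eq_sum_of_support_subset_range {ι : Type*} [Fintype ι] {n q : ℕ}
    {G : (Fin (n + 1) → Fin q) → ℝ} {κ : ι → Fin (n + 1) → Fin q} (hκ : Function.Injective κ)
    (hG : Function.support G ⊆ Set.range κ) (u : Fin (n + 1) → Fin q → ℝ) :
    tucker n q G u = ∑ s, G (κ s) * ∏ i, u i (κ s i) := by
  refine (Fintype.sum_of_injective κ hκ _ _ (fun k hk => ?_) fun _ => rfl).symm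
  rw [Function.notMem_support.mp fun h => hk (hG h), zero_mul]

/-- The positions of the nonzero entries of the SimplE core tensor. Identifying the `2q` coordinates
with two copies of `Fin q` (first and second half), they are the triples `(s, s, s.swap)`: the
relation and the first entity are read in the same half, the second entity in the other one. -/
def simplEIndex (q : ℕ) (s : Fin q ⊕ Fin q) : Fin 3 → Fin (q + q) :=
  ![finSumFinEquiv s, finSumFinEquiv s, finSumFinEquiv s.swap]

theorem simplEIndex_injective (q : ℕ) : Function.Injective (simplEIndex q) :=
  fun _ _ h => finSumFinEquiv.injective (congrFun h 0)

theorem mem_range_simplEIndex {q : ℕ} {k : Fin 3 → Fin (q + q)} :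
    k ∈ Set.range (simplEIndex q) ↔
      (∃ t, k = ![Fin.castAdd q t, Fin.castAdd q t, Fin.natAdd q t]) ∨
        ∃ t, k = ![Fin.natAdd q t, Fin.natAdd q t, Fin.castAdd q t] := by
  simp only [Set.mem_range, Sum.exists, simplEIndex, Sum.swap_inl, Sum.swap_inr,
    finSumFinEquiv_apply_left, finSumFinEquiv_apply_right, eq_comm]

/-- The SimplE core tensor of size `2q` in each mode, with an arbitrary common value `c` for its
nonzero entries; SimplE itself is the case `c = 1 / 2`. -/
noncomputable def simplECore (q : ℕ) (c : ℝ) : (Fin 3 → Fin (q + q)) → ℝ :=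
  (Set.range (simplEIndex q)).indicator fun _ => c

theorem sum_prod_append_simplEIndex {q : ℕ} (v w h₁ t₁ h₂ t₂ : Fin q → ℝ) :
    ∑ s, ∏ i, (![Fin.append v w, Fin.append h₁ t₁, Fin.append h₂ t₂] :
        Fin 3 → Fin (q + q) → ℝ) i (simplEIndex q s i) =
      mip 2 q ![v, h₁, t₂] + mip 2 q ![w, t₁, h₂] := by
  -- `Fin.natAdd_eq_addNat` would hide the pattern of `Fin.append_right`.
  simp [mip_two, simplEIndex, Fin.prod_univ_three, -Fin.natAdd_eq_addNat]

theorem tucker_simplECore {q : ℕ} (c : ℝ) (v w h₁ t₁ h₂ t₂ : Fin q → ℝ) :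
    tucker 2 (q + q) (simplECore q c)
        ![Fin.append v w, Fin.append h₁ t₁, Fin.append h₂ t₂] =
      c * (mip 2 q ![v, h₁, t₂] + mip 2 q ![w, t₁, h₂]) := by
  have simplECore_simplEIndex (s : Fin q ⊕ Fin q) : simplECore q c (simplEIndex q s) = c :=
    Set.indicator_of_mem (Set.mem_range_self s) _
  have support_subset : Function.support (simplECore q c) ⊆ Set.range (simplEIndex q) :=
    Set.support_indicator_subset
  rw [tucker_eq_sum_of_support_subset_range (simplEIndex_injective q) support_subset]
  simp only [simplECore_simplEIndex]
  rw [← Finset.mul_sum, sum_prod_append_simplEIndex]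

/-- the 3-order core tensor `G ∈ ℝ^{2q×2q×2q}` with entries
`G_{k,k,q+k} = 1/2` and `G_{q+k,q+k,k} = 1/2` (for `k ∈ {1,…,q}`) and all other entries
zero recovers the SimplE scoring function: for `r = [v; w]`, `e_1 = [h_1; t_1]`,
`e_2 = [h_2; t_2]`, the Tucker product `G ×_1 r ×_2 e_1 ×_3 e_2` equals
`(1/2) Σ_k (v_k (h_1)_k (t_2)_k + w_k (t_1)_k (h_2)_k)`. Hence SimplE is a sparse special
case of the Tucker core tensor. -/
theorem simplE_as_sparse_tucker (q : ℕ) (hq : 1 ≤ q)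
    (G : (Fin 3 → Fin (q + q)) → ℝ)
    (hG : ∀ k : Fin 3 → Fin (q + q),
      G k = if ∃ t : Fin q, k = ![Fin.castAdd q t, Fin.castAdd q t, Fin.natAdd q t]
        then 1 / 2
        else if ∃ t : Fin q, k = ![Fin.natAdd q t, Fin.natAdd q t, Fin.castAdd q t]
          then 1 / 2 else 0)
    (v w h₁ t₁ h₂ t₂ : Fin q → ℝ) :
    tucker 2 (q + q) G ![Fin.append v w, Fin.append h₁ t₁, Fin.append h₂ t₂]
      = (1 / 2) * ∑ k : Fin q, (v k * h₁ k * t₂ k + w k * t₁ k * h₂ k) := by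
  have hG_core : G = simplECore q (1 / 2) := by
    classical
    ext k
    simp only [hG, simplECore, Set.indicator_apply, mem_range_simplEIndex, ite_or]
  rw [hG_core, tucker_simplECore, mip_two, mip_two, Finset.sum_add_distrib]
end
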